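/- Let 0 < s < 1, let ρ and δρ be continuous functions defined on a neighborhood of ∂Ω_s, and let p ≥ 1. For i = 1, …, p let σ_i : ℝ → ℝ be differentiable at 0 and u_i : ℝ × ℝ² → ℝ be smooth on ℝ × V for some open set V containing the closure of Ω_s, and assume: (a) for every ε ∈ ℝ and every i, the pair (σ_i(ε), u_i(ε,·)) satisfies the weighted Steklov problem in weak form with density ρ_ε = ρ + ε·δρ; and (b) σ_1(0) = σ_2(0) = … = σ_p(0) = σ. Then for all i, j ∈ {1, …, p}: σ_i'(0)·∫_{∂Ω_s} u_i(0,·)·u_j(0,·)·ρ = −σ·∫_{∂Ω_s} u_i(0,·)·u_j(0,·)·δρ. In particular, if in addition the family {u_1(0,·), …, u_p(0,·)} is orthonormal in L²(∂Ω_s, ρ) (∫_{∂Ω_s} u_i(0,·)u_j(0,·)ρ = δ_{ij}), then the quadratic form q_{δρ}(u) = −σ·∫_{∂Ω_s} u²·δρ is diagonalized by this basis, with q_{δρ}(u_i(0,·), u_j(0,·)) = σ_i'(0)·δ_{ij}; i.e., the derivatives σ_i'(0) are the eigenvalues of q_{δρ} on the span of u_1(0,·), …, u_p(0,·). -/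

import Mathlib

/-!
Write `a(u, v)` for the Dirichlet form on the annulus. Testing the weak equation of branch `i` at
parameter `ε` with `u_j(0)`, and the weak equation of branch `j` at parameter `0` with `u_i(ε)`,
evaluates `a(u_i(ε), u_j(0))` in two ways. The Dirichlet forms cancel, and what remains is
`(σ_i(ε) - σ) ∫ ρ u_i(ε) u_j(0) + ε σ_i(ε) ∫ δρ u_i(ε) u_j(0) = 0`.
Dividing by `ε` and letting `ε → 0` gives the claim. Only the continuity in `ε` of the two boundary
integrals is used (`continuous_bInt`), so the Dirichlet form is never differentiated.

The weak equation admits only test functions that are smooth on the whole plane, whereas the branches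
are smooth only near the closed annulus; a cutoff (`exists_smooth_extension`) bridges this gap.
-/

open MeasureTheory

/-- Partial derivative of `u : ℝ × ℝ → ℝ` in the first coordinate. -/
noncomputable def pdx (u : ℝ × ℝ → ℝ) (p : ℝ × ℝ) : ℝ :=
  deriv (fun t => u (t, p.2)) p.1

/-- Partial derivative of `u : ℝ × ℝ → ℝ` in the second coordinate. -/
noncomputable def pdy (u : ℝ × ℝ → ℝ) (p : ℝ × ℝ) : ℝ :=
  deriv (fun t => u (p.1, t)) p.2

/-- The open annulus `Ω_s = {x ∈ ℝ² : s < |x| < 1}`. -/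
noncomputable def ann (s : ℝ) : Set (ℝ × ℝ) :=
  {p | s < Real.sqrt (p.1 ^ 2 + p.2 ^ 2) ∧ Real.sqrt (p.1 ^ 2 + p.2 ^ 2) < 1}

/-- The boundary `∂Ω_s`, the union of the two circles `|x| = s` and `|x| = 1`. -/
noncomputable def annBdry (s : ℝ) : Set (ℝ × ℝ) :=
  {p | Real.sqrt (p.1 ^ 2 + p.2 ^ 2) = s ∨ Real.sqrt (p.1 ^ 2 + p.2 ^ 2) = 1}

/-- The boundary integral `∫_{∂Ω_s} g` with respect to arc length on the two
boundary circles. -/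
noncomputable def bInt (s : ℝ) (g : ℝ × ℝ → ℝ) : ℝ :=
  (∫ θ in (0 : ℝ)..(2 * Real.pi), g (Real.cos θ, Real.sin θ)) +
    s * ∫ θ in (0 : ℝ)..(2 * Real.pi), g (s * Real.cos θ, s * Real.sin θ)

/-- A function smooth on a neighborhood `V` of a closed set `K` agrees on `K` with a function that is
smooth on the whole plane. -/
lemma exists_smooth_extension {K V : Set (ℝ × ℝ)} (hK : IsClosed K) (hV : IsOpen V) (hKV : K ⊆ V)
    {f : ℝ × ℝ → ℝ} (hf : ContDiffOn ℝ (⊤ : ℕ∞) f V) :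
    ∃ v : ℝ × ℝ → ℝ, ContDiff ℝ (⊤ : ℕ∞) v ∧ Set.EqOn v f K := by
  obtain ⟨χ, h0, h1, -⟩ := exists_contMDiffMap_zero_one_nhds_of_isClosed (n := (⊤ : ℕ∞))
    (modelWithCornersSelf ℝ (ℝ × ℝ)) hV.isClosed_compl hK
    (Set.disjoint_left.2 fun x hx hxK => hx (hKV hxK))
  have hχ : ContDiff ℝ (⊤ : ℕ∞) χ := χ.contMDiff.contDiff
  refine ⟨fun x => χ x * f x, contDiff_iff_contDiffAt.2 fun x => ?_, fun x hx => ?_⟩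
  · by_cases hx : x ∈ V
    · exact hχ.contDiffAt.mul (hf.contDiffAt (hV.mem_nhds hx))
    · refine (contDiffAt_const (c := (0 : ℝ))).congr_of_eventuallyEq ?_
      filter_upwards [eventually_nhdsSet_iff_forall.1 h0 x hx] with y hy
      simp [hy]
  · simp [(eventually_nhdsSet_iff_forall.1 h1 x hx).self_of_nhds]

lemma sqrt_circle {r : ℝ} (hr : 0 ≤ r) (θ : ℝ) :
    Real.sqrt ((r * Real.cos θ) ^ 2 + (r * Real.sin θ) ^ 2) = r := by
  rw [show (r * Real.cos θ) ^ 2 + (r * Real.sin θ) ^ 2 = r ^ 2 by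
    linear_combination r ^ 2 * Real.cos_sq_add_sin_sq θ, Real.sqrt_sq hr]

lemma circle_mem_closure_ann {s r : ℝ} (hs : 0 < s) (hs1 : s < 1) (hr : r ∈ Set.Icc s 1) (θ : ℝ) :
    (r * Real.cos θ, r * Real.sin θ) ∈ closure (ann s) := by
  have hc : Continuous fun t : ℝ => (t * Real.cos θ, t * Real.sin θ) := by fun_prop
  rw [← closure_Ioo hs1.ne] at hr
  refine map_mem_closure (f := fun t : ℝ => (t * Real.cos θ, t * Real.sin θ)) hc hr fun t ht => ?_
  simp only [ann, Set.mem_setOf_eq]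
  rw [sqrt_circle (hs.trans ht.1).le]
  exact ht

lemma annBdry_subset_closure_ann {s : ℝ} (hs : 0 < s) (hs1 : s < 1) :
    annBdry s ⊆ closure (ann s) := by
  intro q hq
  set z : ℂ := ⟨q.1, q.2⟩ with hz
  have hn : ‖z‖ = Real.sqrt (q.1 ^ 2 + q.2 ^ 2) := by
    rw [Complex.norm_def, Complex.normSq_apply]; simp [hz, sq]
  have hmem : ‖z‖ ∈ Set.Icc s 1 := by
    rw [hn]
    rcases hq with h | h <;> rw [h] <;> constructor <;> linarith
  have := circle_mem_closure_ann hs hs1 hmem z.arg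
  rwa [Complex.norm_mul_cos_arg, Complex.norm_mul_sin_arg] at this

lemma bInt_congr {s : ℝ} (hs : 0 < s) {f g : ℝ × ℝ → ℝ} (h : Set.EqOn f g (annBdry s)) :
    bInt s f = bInt s g := by
  have h1 : ∀ θ : ℝ, f (Real.cos θ, Real.sin θ) = g (Real.cos θ, Real.sin θ) := fun θ =>
    h (Or.inr (by simp))
  have h2 : ∀ θ : ℝ, f (s * Real.cos θ, s * Real.sin θ) = g (s * Real.cos θ, s * Real.sin θ) :=
    fun θ => h (Or.inl (sqrt_circle hs.le θ))
  simp only [bInt, h1, h2]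

lemma continuous_on_outer_circle {X : Type*} [TopologicalSpace X] {s : ℝ} {F : X → ℝ × ℝ → ℝ}
    (hF : ContinuousOn (Function.uncurry F) (Set.univ ×ˢ annBdry s)) :
    Continuous fun z : X × ℝ => F z.1 (Real.cos z.2, Real.sin z.2) :=
  hF.comp_continuous (f := fun z : X × ℝ => (z.1, (Real.cos z.2, Real.sin z.2))) (by fun_prop)
    fun z => ⟨trivial, Or.inr (by simp)⟩

lemma continuous_on_inner_circle {X : Type*} [TopologicalSpace X] {s : ℝ} (hs : 0 < s) {F : X → ℝ × ℝ → ℝ}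
    (hF : ContinuousOn (Function.uncurry F) (Set.univ ×ˢ annBdry s)) :
    Continuous fun z : X × ℝ => F z.1 (s * Real.cos z.2, s * Real.sin z.2) :=
  hF.comp_continuous (f := fun z : X × ℝ => (z.1, (s * Real.cos z.2, s * Real.sin z.2)))
    (by fun_prop) fun z => ⟨trivial, Or.inl (sqrt_circle hs.le z.2)⟩

lemma continuous_bInt {s : ℝ} (hs : 0 < s) {F : ℝ → ℝ × ℝ → ℝ}
    (hF : ContinuousOn (Function.uncurry F) (Set.univ ×ˢ annBdry s)) :
    Continuous fun ε => bInt s (F ε) := by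
  unfold bInt
  exact (intervalIntegral.continuous_parametric_intervalIntegral_of_continuous'
    (continuous_on_outer_circle hF) _ _).add (continuous_const.mul
      (intervalIntegral.continuous_parametric_intervalIntegral_of_continuous'
        (continuous_on_inner_circle hs hF) _ _))

lemma bInt_add_mul {s : ℝ} (hs : 0 < s) {f g : ℝ × ℝ → ℝ} (hf : ContinuousOn f (annBdry s))
    (hg : ContinuousOn g (annBdry s)) (c : ℝ) :
    bInt s (fun q => f q + c * g q) = bInt s f + c * bInt s g := by
  have h1 : ∀ {f : ℝ × ℝ → ℝ}, ContinuousOn f (annBdry s) →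
      Continuous fun θ : ℝ => f (Real.cos θ, Real.sin θ) := fun hf =>
    hf.comp_continuous (by fun_prop) fun θ => Or.inr (by simp)
  have h2 : ∀ {f : ℝ × ℝ → ℝ}, ContinuousOn f (annBdry s) →
      Continuous fun θ : ℝ => f (s * Real.cos θ, s * Real.sin θ) := fun hf =>
    hf.comp_continuous (by fun_prop) fun θ => Or.inl (sqrt_circle hs.le θ)
  unfold bInt
  rw [intervalIntegral.integral_add ((h1 hf).intervalIntegrable _ _)
      (((h1 hg).intervalIntegrable _ _).const_mul c),
    intervalIntegral.integral_add ((h2 hf).intervalIntegrable _ _)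
      (((h2 hg).intervalIntegrable _ _).const_mul c),
    intervalIntegral.integral_const_mul, intervalIntegral.integral_const_mul]
  ring

lemma isOpen_ann (s : ℝ) : IsOpen (ann s) := by
  have hc : Continuous fun q : ℝ × ℝ => Real.sqrt (q.1 ^ 2 + q.2 ^ 2) := by fun_prop
  exact (isOpen_lt continuous_const hc).inter (isOpen_lt hc continuous_const)

lemma pdx_eqOn {U : Set (ℝ × ℝ)} (hU : IsOpen U) {f g : ℝ × ℝ → ℝ} (h : Set.EqOn f g U) :
    Set.EqOn (pdx f) (pdx g) U := fun q hq => by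
  refine Filter.EventuallyEq.deriv_eq ?_
  have hc : Continuous fun t : ℝ => (t, q.2) := by fun_prop
  filter_upwards [hc.continuousAt.preimage_mem_nhds (hU.mem_nhds hq)] with t ht using h ht

lemma pdy_eqOn {U : Set (ℝ × ℝ)} (hU : IsOpen U) {f g : ℝ × ℝ → ℝ} (h : Set.EqOn f g U) :
    Set.EqOn (pdy f) (pdy g) U := fun q hq => by
  refine Filter.EventuallyEq.deriv_eq ?_
  have hc : Continuous fun t : ℝ => (q.1, t) := by fun_prop
  filter_upwards [hc.continuousAt.preimage_mem_nhds (hU.mem_nhds hq)] with t ht using h ht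

/-- A weak equation valid against test functions smooth on the whole plane is valid against every
function smooth near the closed annulus. -/
lemma weak_of_contDiffOn {s : ℝ} (hs : 0 < s) (hs1 : s < 1) {V : Set (ℝ × ℝ)} (hV : IsOpen V)
    (hVΩ : closure (ann s) ⊆ V) {u g : ℝ × ℝ → ℝ} {c : ℝ}
    (hweak : ∀ v : ℝ × ℝ → ℝ, ContDiff ℝ (⊤ : ℕ∞) v →
      (∫ q in ann s, (pdx u q * pdx v q + pdy u q * pdy v q)) = c * bInt s (fun q => g q * v q))
    {w : ℝ × ℝ → ℝ} (hw : ContDiffOn ℝ (⊤ : ℕ∞) w V) :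
    (∫ q in ann s, (pdx u q * pdx w q + pdy u q * pdy w q)) = c * bInt s (fun q => g q * w q) := by
  obtain ⟨v, hv, hvw⟩ := exists_smooth_extension isClosed_closure hV hVΩ hw
  have hA := hvw.mono subset_closure
  have hB := hvw.mono (annBdry_subset_closure_ann hs hs1)
  rw [← bInt_congr hs (f := fun q => g q * v q) (g := fun q => g q * w q)
    (fun q hq => by simp only [hB hq]), ← hweak v hv]
  refine setIntegral_congr_fun (isOpen_ann s).measurableSet fun q hq => ?_
  simp only [pdx_eqOn (isOpen_ann s) hA hq, pdy_eqOn (isOpen_ann s) hA hq]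

/-- let `(σ_i(ε), u_i(ε,·))`, `i = 1, …, p`, be smooth analytic
eigenbranches through a common eigenvalue `σ = σ_i(0)` of the weighted Steklov
problem on `Ω_s` under the density perturbation `ρ_ε = ρ + ε δρ`. Then
`σ_i'(0) ∫_{∂Ω_s} u_i(0,·) u_j(0,·) ρ = −σ ∫_{∂Ω_s} u_i(0,·) u_j(0,·) δρ` for
all `i, j`; in particular, if the `u_i(0,·)` are orthonormal in
`L²(∂Ω_s, ρ)`, this basis diagonalizes the quadratic form
`q_{δρ}(u) = −σ ∫_{∂Ω_s} u² δρ`, whose eigenvalues are the `σ_i'(0)`. -/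
theorem steklov_multiple_eigenvalue_branches_diagonalize
    (s : ℝ) (hs : 0 < s) (hs1 : s < 1)
    (ρ δρ : ℝ × ℝ → ℝ) (W : Set (ℝ × ℝ)) (hW : IsOpen W) (hWb : annBdry s ⊆ W)
    (hρ : ContinuousOn ρ W) (hδρ : ContinuousOn δρ W)
    (p : ℕ) (hp : 1 ≤ p)
    (σ : Fin p → ℝ → ℝ) (hσd : ∀ i, DifferentiableAt ℝ (σ i) 0)
    (u : Fin p → ℝ → ℝ × ℝ → ℝ) (V : Set (ℝ × ℝ)) (hV : IsOpen V)
    (hVΩ : closure (ann s) ⊆ V)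
    (hu : ∀ i, ContDiffOn ℝ (⊤ : ℕ∞) (fun q : ℝ × (ℝ × ℝ) => u i q.1 q.2) (Set.univ ×ˢ V))
    (hweak : ∀ i, ∀ ε : ℝ, ∀ v : ℝ × ℝ → ℝ, ContDiff ℝ (⊤ : ℕ∞) v →
      (∫ q in ann s, (pdx (u i ε) q * pdx v q + pdy (u i ε) q * pdy v q)) =
        σ i ε * bInt s (fun q => (ρ q + ε * δρ q) * u i ε q * v q))
    (σval : ℝ) (hσ0 : ∀ i, σ i 0 = σval) :
    (∀ i j : Fin p,
      deriv (σ i) 0 * bInt s (fun q => u i 0 q * u j 0 q * ρ q) =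
        -σval * bInt s (fun q => u i 0 q * u j 0 q * δρ q)) ∧
    ((∀ i j : Fin p,
        bInt s (fun q => u i 0 q * u j 0 q * ρ q) = if i = j then 1 else 0) →
      ∀ i j : Fin p,
        -σval * bInt s (fun q => u i 0 q * u j 0 q * δρ q) =
          if i = j then deriv (σ i) 0 else 0) := by
  have main : ∀ i j : Fin p,
      deriv (σ i) 0 * bInt s (fun q => u i 0 q * u j 0 q * ρ q) =
        -σval * bInt s (fun q => u i 0 q * u j 0 q * δρ q) := by
    intro i j
    have hbV : annBdry s ⊆ V := (annBdry_subset_closure_ann hs hs1).trans hVΩ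
    have huε : ∀ k ε, ContDiffOn ℝ (⊤ : ℕ∞) (u k ε) V := fun k ε =>
      (hu k).comp (f := fun q : ℝ × ℝ => (ε, q)) (by fun_prop) fun q hq => ⟨trivial, hq⟩
    have hcont : ∀ h : ℝ × ℝ → ℝ, ContinuousOn h W → ContinuousOn
        (Function.uncurry fun ε q => u i ε q * u j 0 q * h q) (Set.univ ×ˢ annBdry s) := by
      intro h hh
      have hsnd : Set.MapsTo (Prod.snd : ℝ × (ℝ × ℝ) → ℝ × ℝ) (Set.univ ×ˢ annBdry s)
        (annBdry s) := fun z hz => hz.2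
      exact (((hu i).continuousOn.mono (Set.prod_mono_right hbV)).mul
        (((huε j 0).continuousOn.mono hbV).comp continuous_snd.continuousOn hsnd)).mul
          ((hh.mono hWb).comp continuous_snd.continuousOn hsnd)
    have hcontε : ∀ h : ℝ × ℝ → ℝ, ContinuousOn h W → ∀ ε, ContinuousOn
        (fun q => u i ε q * u j 0 q * h q) (annBdry s) := fun h hh ε =>
      (((huε i ε).continuousOn.mono hbV).mul ((huε j 0).continuousOn.mono hbV)).mul (hh.mono hWb)
    set B : ℝ → ℝ := fun ε => bInt s (fun q => u i ε q * u j 0 q * ρ q) with hB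
    set C : ℝ → ℝ := fun ε => bInt s (fun q => u i ε q * u j 0 q * δρ q) with hC
    have hBc : Continuous B := continuous_bInt hs (hcont ρ hρ)
    have hCc : Continuous C := continuous_bInt hs (hcont δρ hδρ)
    -- The Dirichlet form of `u_i(ε)` and `u_j(0)`, evaluated through both weak equations.
    have key : ∀ ε, (σ i ε - σ i 0) * B ε = ε * (-σ i ε * C ε) := by
      intro ε
      have e1 := weak_of_contDiffOn hs hs1 hV hVΩ (hweak i ε) (huε j 0)
      have e2 := weak_of_contDiffOn hs hs1 hV hVΩ (hweak j 0) (huε i ε)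
      have f1 : bInt s (fun q => (ρ q + ε * δρ q) * u i ε q * u j 0 q) = B ε + ε * C ε := by
        rw [hB, hC, ← bInt_add_mul hs (hcontε ρ hρ ε) (hcontε δρ hδρ ε) ε]
        congr 1; funext q; ring
      have f2 : bInt s (fun q => (ρ q + 0 * δρ q) * u j 0 q * u i ε q) = B ε := by
        rw [hB]; congr 1; funext q; ring
      have e3 : (∫ q in ann s, (pdx (u i ε) q * pdx (u j 0) q + pdy (u i ε) q * pdy (u j 0) q)) =
          ∫ q in ann s, (pdx (u j 0) q * pdx (u i ε) q + pdy (u j 0) q * pdy (u i ε) q) := by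
        congr 1; funext q; ring
      rw [f1] at e1
      rw [f2] at e2
      rw [e1, e2, hσ0 j] at e3
      rw [hσ0 i]
      linear_combination e3
    have hslope := (hasDerivAt_iff_tendsto_slope_zero.1 (hσd i).hasDerivAt).mul
      (hBc.continuousAt.tendsto.mono_left (nhdsWithin_le_nhds (a := (0 : ℝ)) (s := {0}ᶜ)))
    have hlim : Filter.Tendsto (fun ε => -σ i ε * C ε) (nhdsWithin 0 {0}ᶜ)
        (nhds (-σ i 0 * C 0)) :=
      ((hσd i).continuousAt.neg.mul hCc.continuousAt).tendsto.mono_left nhdsWithin_le_nhds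
    rw [← hσ0 i]
    refine tendsto_nhds_unique hslope (hlim.congr' ?_)
    filter_upwards [self_mem_nhdsWithin] with t ht
    have ht' : t ≠ 0 := ht
    rw [zero_add, smul_eq_mul, mul_assoc, key t, inv_mul_cancel_left₀ ht']
  refine ⟨main, fun horth i j => ?_⟩
  rw [← main i j, horth i j]
  split_ifs <;> simp
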